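/- Let K be a field of characteristic zero, α, β, γ ∈ K with β ≠ 0 and γ ≠ 0, and suppose the roots λ, μ of t² − αt − β lie in K. Then the down-up algebra A = A(α,β,γ) has a non-trivial stably free right ideal, i.e. a right ideal that is stably free but not free as a right A-module. -/

import Mathlib

/-!
Write `A = A(α,β,γ)`. As `γ ≠ 0`, the second defining relation makes `(U, D + 1)` a unimodular row,
so the right ideal `J = {f | (D + 1) f ∈ U A}`, which is isomorphic to the kernel of
`(U, D + 1) : A² → A`, satisfies `J ⊕ A ≅ A²`. If `J` were free, it would have rank one and hence be
generated by a single element `t`.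

With `B = K[X, Y]` and the automorphism `σ : Y ↦ X ↦ αX + βY + γ`, sending `U` to `Y D⁻¹` embeds
`A` into the skew Laurent ring `B[D, D⁻¹; σ]`, where `UD = Y` and `DU = X`. There `t` divides the
monomial `U² ∈ J`, so `t = c Dⁿ` is itself a monomial; comparing coefficients of `Dⁿ` in
`(D + 1) t ∈ U A` gives `Y ∣ c`, so `Y` divides all coefficients of all elements of `J`. But
`(1 - D) U (DU - αUD - γ)` lies in `J` and has constant coefficient `-X (X - αY - γ)`.
-/

noncomputable section

/-- Defining relations of the down-up algebra `A(α,β,γ)`: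
`D = ι 0`, `U = ι 1`, relations `DU² = αUDU + βU²D + γU` and `D²U = αDUD + βUD² + γD`. -/
inductive DownUpRel (K : Type) [Field K] (a b g : K) :
    FreeAlgebra K (Fin 2) → FreeAlgebra K (Fin 2) → Prop
  | rel1 : DownUpRel K a b g
      (FreeAlgebra.ι K (0 : Fin 2) * FreeAlgebra.ι K (1 : Fin 2) * FreeAlgebra.ι K (1 : Fin 2))
      (a • (FreeAlgebra.ι K (1 : Fin 2) * FreeAlgebra.ι K (0 : Fin 2) * FreeAlgebra.ι K (1 : Fin 2)) +
       b • (FreeAlgebra.ι K (1 : Fin 2) * FreeAlgebra.ι K (1 : Fin 2) * FreeAlgebra.ι K (0 : Fin 2)) +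
       g • FreeAlgebra.ι K (1 : Fin 2))
  | rel2 : DownUpRel K a b g
      (FreeAlgebra.ι K (0 : Fin 2) * FreeAlgebra.ι K (0 : Fin 2) * FreeAlgebra.ι K (1 : Fin 2))
      (a • (FreeAlgebra.ι K (0 : Fin 2) * FreeAlgebra.ι K (1 : Fin 2) * FreeAlgebra.ι K (0 : Fin 2)) +
       b • (FreeAlgebra.ι K (1 : Fin 2) * FreeAlgebra.ι K (0 : Fin 2) * FreeAlgebra.ι K (0 : Fin 2)) +
       g • FreeAlgebra.ι K (0 : Fin 2))

/-- The down-up algebra `A(α,β,γ)`. -/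
abbrev DownUp (K : Type) [Field K] (a b g : K) := RingQuot (DownUpRel K a b g)

/-- The generator `D` of `A(α,β,γ)`. -/
def DownUp.D (K : Type) [Field K] (a b g : K) : DownUp K a b g :=
  RingQuot.mkAlgHom K (DownUpRel K a b g) (FreeAlgebra.ι K (0 : Fin 2))

/-- The generator `U` of `A(α,β,γ)`. -/
def DownUp.U (K : Type) [Field K] (a b g : K) : DownUp K a b g :=
  RingQuot.mkAlgHom K (DownUpRel K a b g) (FreeAlgebra.ι K (1 : Fin 2))

/-- A right `A`-module `P` (realized as a left `Aᵐᵒᵖ`-module) is stably free if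
`P ⊕ Aⁿ ≅ Aᵐ` as right `A`-modules for some naturals `n m`. -/
def IsStablyFreeRight (A : Type) [Ring A] (P : Type) [AddCommGroup P] [Module Aᵐᵒᵖ P] : Prop :=
  ∃ n m : ℕ, Nonempty ((P × (Fin n → A)) ≃ₗ[Aᵐᵒᵖ] (Fin m → A))

section Modules

theorem invariantBasisNumber_of_ringHom {R S : Type*} [Semiring R] [Semiring S]
    [InvariantBasisNumber S] (f : R →+* S) : InvariantBasisNumber R := by
  rw [invariantBasisNumber_iff_matrix]
  intro n m M N hMN hNM
  refine invariantBasisNumber_iff_matrix.1 ‹_› n m (M.map f) (N.map f) ?_ ?_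
  · rw [← Matrix.map_mul, hMN, Matrix.map_one f f.map_zero f.map_one]
  · rw [← Matrix.map_mul, hNM, Matrix.map_one f f.map_zero f.map_one]

variable {R M N P : Type*} [Ring R] [AddCommGroup M] [AddCommGroup N] [AddCommGroup P]
  [Module R M] [Module R N] [Module R P]

theorem exact_comap_range_coprod (f : M →ₗ[R] P) (g : N →ₗ[R] P) (hf : Function.Injective f) :
    Function.Exact
      ((-((LinearEquiv.ofInjective f hf).symm.toLinearMap ∘ₗ
        g.restrict fun _ h => h)).prod ((LinearMap.range f).comap g).subtype)
      (f.coprod g) := by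
  have hf_symm (p : LinearMap.range f) : f ((LinearEquiv.ofInjective f hf).symm p) = p :=
    congrArg Subtype.val ((LinearEquiv.ofInjective f hf).apply_symm_apply p)
  rintro ⟨m, n⟩
  rw [LinearMap.coprod_apply]
  constructor
  · intro h
    have hn : g n = f (-m) := by rw [map_neg, eq_neg_iff_add_eq_zero, add_comm, h]
    refine ⟨⟨n, -m, hn.symm⟩, Prod.ext (hf ?_) rfl⟩
    simp [hf_symm, hn]
  · rintro ⟨n', h⟩
    obtain ⟨rfl, rfl⟩ := Prod.ext_iff.1 h
    simp [hf_symm]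

theorem nonempty_comap_range_prod_equiv {f : M →ₗ[R] P} (hf : Function.Injective f)
    {g : N →ₗ[R] P} {s : P →ₗ[R] M × N} (hs : f.coprod g ∘ₗ s = .id) :
    Nonempty (((LinearMap.range f).comap g × P) ≃ₗ[R] M × N) :=
  let h := exact_comap_range_coprod f g hf
  ⟨(h.splitSurjectiveEquiv (fun _ _ h => Subtype.ext (congrArg Prod.snd h)) ⟨s, hs⟩).1.symm⟩

open Cardinal in
theorem nonempty_equiv_of_prod_equiv_prod [InvariantBasisNumber R] [Module.Free R N]
    (eM : M ≃ₗ[R] R) (e : (N × M) ≃ₗ[R] M × M) : Nonempty (N ≃ₗ[R] M) := by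
  let bM : Module.Basis Unit R M := (Module.Basis.singleton Unit R).map eM.symm
  let bN := Module.Free.chooseBasis R N
  have hcard : #(Module.Free.ChooseBasisIndex R N) + 1 = 1 + 1 := by
    simpa [one_add_one_eq_two] using
      mk_eq_mk_of_basis (bN.prod bM) ((bM.prod bM).map e.symm)
  obtain ⟨_, _⟩ := Cardinal.eq_one_iff_unique.1 (Cardinal.add_one_inj.1 hcard)
  have := uniqueOfSubsingleton (Classical.arbitrary (Module.Free.ChooseBasisIndex R N))
  exact ⟨bN.equiv bM (Equiv.ofUnique _ _)⟩

end Modules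

section UnimodularRow

variable {A : Type*} [Ring A]

/-- The right ideal `{f | b * f ∈ a * A}`. If `a` is left regular it is isomorphic, via
`f ↦ (-a⁻¹ * b * f, f)`, to the kernel of `(c, f) ↦ a * c + b * f` on `A²`, hence stably free as
soon as the row `(a, b)` is unimodular. -/
def colonIdeal (a b : A) : Submodule Aᵐᵒᵖ A :=
  (LinearMap.range (LinearMap.mulLeft Aᵐᵒᵖ a)).comap (LinearMap.mulLeft Aᵐᵒᵖ b)

theorem mem_colonIdeal {a b f : A} : f ∈ colonIdeal a b ↔ ∃ c, a * c = b * f :=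
  Iff.rfl

theorem nonempty_colonIdeal_prod_equiv {a b u v : A} (ha : IsLeftRegular a)
    (h : a * u + b * v = 1) : Nonempty ((colonIdeal a b × A) ≃ₗ[Aᵐᵒᵖ] A × A) := by
  refine nonempty_comap_range_prod_equiv (f := LinearMap.mulLeft Aᵐᵒᵖ a) ha
    (s := (LinearMap.mulLeft Aᵐᵒᵖ u).prod (LinearMap.mulLeft Aᵐᵒᵖ v)) (LinearMap.ext fun c => ?_)
  simp [← mul_assoc, ← add_mul, h]

theorem isStablyFreeRight_colonIdeal {A : Type} [Ring A] {a b u v : A} (ha : IsLeftRegular a)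
    (h : a * u + b * v = 1) : IsStablyFreeRight A (colonIdeal a b) := by
  obtain ⟨e⟩ := nonempty_colonIdeal_prod_equiv ha h
  exact ⟨1, 2, ⟨((LinearEquiv.refl _ _).prodCongr (LinearEquiv.funUnique (Fin 1) Aᵐᵒᵖ A)) ≪≫ₗ e ≪≫ₗ
    (LinearEquiv.finTwoArrow Aᵐᵒᵖ A).symm⟩⟩

/-- A ring as a right module over itself is free of rank one. -/
def selfEquivMulOpposite (A : Type*) [Ring A] : A ≃ₗ[Aᵐᵒᵖ] Aᵐᵒᵖ :=
  { MulOpposite.opAddEquiv with map_smul' := fun _ _ => rfl }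

theorem exists_generator_colonIdeal_of_free [InvariantBasisNumber A] {a b u v : A}
    (ha : IsLeftRegular a) (h : a * u + b * v = 1) [Module.Free Aᵐᵒᵖ (colonIdeal a b)] :
    ∃ t ∈ colonIdeal a b, ∀ f ∈ colonIdeal a b, t ∣ f := by
  obtain ⟨e⟩ := nonempty_colonIdeal_prod_equiv ha h
  obtain ⟨e⟩ := nonempty_equiv_of_prod_equiv_prod (selfEquivMulOpposite A) e
  refine ⟨e.symm 1, (e.symm 1).2, fun f hf => ⟨e ⟨f, hf⟩, ?_⟩⟩
  have hf_smul : (⟨f, hf⟩ : colonIdeal a b) = MulOpposite.op (e ⟨f, hf⟩) • e.symm 1 := by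
    rw [← map_smul, op_smul_eq_mul, one_mul, e.symm_apply_apply]
  exact congrArg Subtype.val hf_smul

end UnimodularRow

section SkewGroupAlgebra

open Finset SkewMonoidAlgebra

variable {B G : Type*} [CommRing B] [Group G] [MulSemiringAction G B]

theorem dvd_coeff_single_mul (g : G) (b : B) (f : SkewMonoidAlgebra B G) (m : G) :
    b ∣ (single g b * f).coeff m := by
  rw [coeff_single_mul]
  exact dvd_mul_right _ _

theorem isLeftRegular_single [IsDomain B] (g : G) {b : B} (hb : b ≠ 0) :
    IsLeftRegular (single g b) := by
  intro f₁ f₂ h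
  ext m
  have hm := congrArg (fun f => f.coeff (g * m)) h
  simpa only [coeff_single_mul, inv_mul_cancel_left, mul_right_inj' hb, smul_left_cancel_iff]
    using hm

theorem exists_single_pow_eq [IsDomain B] (g : G) {b : B} (hb : b ≠ 0) (n : ℕ) :
    ∃ c : B, c ≠ 0 ∧ single g b ^ n = single (g ^ n) c := by
  induction n with
  | zero => exact ⟨1, one_ne_zero, by rw [pow_zero, pow_zero, one_def]⟩
  | succ n ih =>
    obtain ⟨c, hc, ih⟩ := ih
    refine ⟨c * g ^ n • b, mul_ne_zero hc (smul_ne_zero_iff_ne _ |>.2 hb), ?_⟩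
    rw [pow_succ, ih, single_mul_single, pow_succ]

theorem coeff_mul_of_uniqueMul {t h : SkewMonoidAlgebra B G} {m n : G}
    (hm : m ∈ t.support) (hn : n ∈ h.support) (hu : UniqueMul t.support h.support m n) :
    (t * h).coeff (m * n) = t.coeff m * m • h.coeff n := by
  classical
  rw [coeff_mul, sum_def', sum_eq_single_of_mem m hm, sum_def',
    sum_eq_single_of_mem n hn, if_pos rfl]
  · intro n' hn' hne
    exact if_neg fun e => hne (hu hm hn' e).2
  · intro m' hm' hne
    rw [sum_def']
    exact sum_eq_zero fun n' hn' => if_neg fun e => hne (hu hm' hn' e).1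

theorem mul_eq_of_uniqueMul_of_mul_eq_single [IsDomain B] {t h : SkewMonoidAlgebra B G}
    {g m n : G} {b : B} (e : t * h = single g b) (hm : m ∈ t.support) (hn : n ∈ h.support)
    (hu : UniqueMul t.support h.support m n) : m * n = g := by
  classical
  have hcoeff : (t * h).coeff (m * n) ≠ 0 := by
    rw [coeff_mul_of_uniqueMul hm hn hu]
    exact mul_ne_zero (mem_support_iff.1 hm) ((smul_ne_zero_iff_ne m).2 (mem_support_iff.1 hn))
  rw [e, coeff_single_apply] at hcoeff
  exact (ite_ne_right_iff.1 hcoeff).1.symm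

theorem exists_eq_single_of_mul_eq_single [IsDomain B] [TwoUniqueProds G]
    {t h : SkewMonoidAlgebra B G} {g : G} {b : B} (hb : b ≠ 0) (e : t * h = single g b) :
    ∃ n c, t = single n c := by
  classical
  have hth : t * h ≠ 0 := e ▸ mt single_eq_zero.1 hb
  have hcard_t : 0 < #t.support :=
    card_pos.2 (nonempty_iff_ne_empty.2 (mt support_eq_empty.1 (left_ne_zero_of_mul hth)))
  have hcard_h : 0 < #h.support :=
    card_pos.2 (nonempty_iff_ne_empty.2 (mt support_eq_empty.1 (right_ne_zero_of_mul hth)))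
  have hcard : #t.support * #h.support ≤ 1 := by
    by_contra! hlt
    obtain ⟨p, hp, q, hq, hpq, hup, huq⟩ := TwoUniqueProds.uniqueMul_of_one_lt_card hlt
    rw [mem_product] at hp hq
    have hp_mul := mul_eq_of_uniqueMul_of_mul_eq_single e hp.1 hp.2 hup
    have hq_mul := mul_eq_of_uniqueMul_of_mul_eq_single e hq.1 hq.2 huq
    have hqp := hup hq.1 hq.2 (hq_mul.trans hp_mul.symm)
    exact hpq (Prod.ext hqp.1.symm hqp.2.symm)
  obtain ⟨n, hn⟩ := card_eq_one.1
    (show #t.support = 1 from le_antisymm (by nlinarith) hcard_t)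
  refine ⟨n, t.coeff n, coeff_injective ?_⟩
  rw [coeff_single]
  exact Finsupp.support_subset_singleton.1 (by rw [support_coeff, hn])

theorem dvd_coeff_mul_of_single_add_one_mul_eq [IsDomain B] [TwoUniqueProds G]
    {t a h : SkewMonoidAlgebra B G} {g g' k : G} {x b : B} (hg : g ≠ 1) (hb : b ≠ 0)
    (ha : (single g 1 + 1) * t = single g' x * a) (hh : t * h = single k b)
    (h' : SkewMonoidAlgebra B G) (m : G) : x ∣ (t * h').coeff m := by
  classical
  obtain ⟨n, c, rfl⟩ := exists_eq_single_of_mul_eq_single hb hh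
  have hc : ((single g 1 + 1) * single n c).coeff n = c := by
    simp [add_mul, single_mul_single, hg]
  have hxc : x ∣ c := by
    rw [← hc, ha]
    exact dvd_coeff_single_mul g' x a n
  exact hxc.trans (dvd_coeff_single_mul n c h' m)

end SkewGroupAlgebra

section GeneralizedWeyl

variable {K A B : Type*} [CommRing K] [Ring A] [Algebra K A] [CommRing B] [Algebra K B]

/-- The elements `D`, `U` of the `K`-algebra `A` satisfy over `ι : B → A` the relations of Bavula's
generalized Weyl algebra `B(σ, x)`, normalized so that `UD` is the image of `x`. -/
structure IsGeneralizedWeyl (σ : B ≃ₐ[K] B) (x : B) (ι : B →ₐ[K] A) (D U : A) : Prop where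
  D_mul (b : B) : D * ι b = ι (σ b) * D
  mul_U (b : B) : ι b * U = U * ι (σ b)
  U_mul_D : U * D = ι x
  D_mul_U : D * U = ι (σ x)

/-- The term of degree `n` in the ladder `…, U², U, 1, D, D², …`; one of the two exponents is
always `0`. -/
def ladder (D U : A) (n : ℤ) : A :=
  D ^ n.toNat * U ^ (-n).toNat

@[simp]
theorem ladder_natCast (D U : A) (n : ℕ) : ladder D U n = D ^ n := by
  simp [ladder]

@[simp]
theorem ladder_neg_natCast (D U : A) (n : ℕ) : ladder D U (-n) = U ^ n := by
  simp [ladder]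

theorem ladder_neg (D U : A) (n : ℤ) : ladder D U (-n) = ladder U D n := by
  obtain ⟨k, rfl | rfl⟩ := n.eq_nat_or_neg <;> simp

theorem map_ladder {A' : Type*} [Ring A'] [Algebra K A'] (φ : A →ₐ[K] A') (D U : A) (n : ℤ) :
    φ (ladder D U n) = ladder (φ D) (φ U) n := by
  simp [ladder]

/-- The combination `∑ ι (v n) * ladder D U n` with coefficients in `B`. -/
def ladderSum (ι : B →ₐ[K] A) (D U : A) : (ℤ →₀ B) →+ A :=
  Finsupp.liftAddHom fun n => (AddMonoidHom.mulRight (ladder D U n)).comp (ι : B →+ A)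

@[simp]
theorem ladderSum_single (ι : B →ₐ[K] A) (D U : A) (n : ℤ) (b : B) :
    ladderSum ι D U (.single n b) = ι b * ladder D U n := by
  simp [ladderSum]

theorem range_ladderSum_le_swap (ι : B →ₐ[K] A) (D U : A) :
    (ladderSum ι D U).range ≤ (ladderSum ι U D).range := by
  rintro _ ⟨v, rfl⟩
  induction v using Finsupp.induction_linear with
  | zero => simp
  | add v w hv hw => rw [map_add]; exact add_mem hv hw
  | single n b => exact ⟨.single (-n) b, by rw [ladderSum_single, ladderSum_single, ladder_neg]⟩

theorem range_ladderSum_swap (ι : B →ₐ[K] A) (D U : A) :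
    (ladderSum ι D U).range = (ladderSum ι U D).range :=
  le_antisymm (range_ladderSum_le_swap ι D U) (range_ladderSum_le_swap ι U D)

theorem mul_mem_range_ladderSum {ι : B →ₐ[K] A} {D U : A} {a : A}
    (ha : ∀ b n, a * (ι b * ladder D U n) ∈ (ladderSum ι D U).range) {s : A}
    (hs : s ∈ (ladderSum ι D U).range) : a * s ∈ (ladderSum ι D U).range := by
  obtain ⟨v, rfl⟩ := hs
  induction v using Finsupp.induction_linear with
  | zero => simp
  | add v w hv hw => rw [map_add, mul_add]; exact add_mem hv hw
  | single n b => rw [ladderSum_single]; exact ha b n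

theorem algebraMap_mul_mem_range_ladderSum (ι : B →ₐ[K] A) (D U : A) (r : K) {s : A}
    (hs : s ∈ (ladderSum ι D U).range) : algebraMap K A r * s ∈ (ladderSum ι D U).range :=
  mul_mem_range_ladderSum (fun b n => ⟨.single n (algebraMap K B r * b), by
    rw [ladderSum_single, map_mul, AlgHom.commutes, mul_assoc]⟩) hs

namespace IsGeneralizedWeyl

variable {σ : B ≃ₐ[K] B} {x : B} {ι : B →ₐ[K] A} {D U : A}

protected theorem symm (h : IsGeneralizedWeyl σ x ι D U) :
    IsGeneralizedWeyl σ.symm (σ x) ι U D where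
  D_mul b := by rw [h.mul_U, σ.apply_symm_apply]
  mul_U b := by rw [h.D_mul, σ.apply_symm_apply]
  U_mul_D := h.D_mul_U
  D_mul_U := by rw [h.U_mul_D, σ.symm_apply_apply]

theorem exists_mul_ladder (h : IsGeneralizedWeyl σ x ι D U) (n : ℤ) :
    ∃ c, D * ladder D U n = ι c * ladder D U (n + 1) := by
  obtain ⟨k, rfl | rfl⟩ := n.eq_nat_or_neg
  · refine ⟨1, ?_⟩
    rw [map_one, one_mul, ← Nat.cast_succ, ladder_natCast, ladder_natCast, pow_succ']
  · cases k with
    | zero => exact ⟨1, by simp [ladder]⟩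
    | succ k =>
      refine ⟨σ x, ?_⟩
      rw [ladder_neg_natCast, pow_succ', ← mul_assoc, h.D_mul_U, Nat.cast_succ, neg_add,
        neg_add_cancel_right, ladder_neg_natCast]

theorem D_mul_mem_range_ladderSum (h : IsGeneralizedWeyl σ x ι D U) {s : A}
    (hs : s ∈ (ladderSum ι D U).range) : D * s ∈ (ladderSum ι D U).range := by
  refine mul_mem_range_ladderSum (fun b n => ?_) hs
  obtain ⟨c, hc⟩ := h.exists_mul_ladder n
  refine ⟨.single (n + 1) (σ b * c), ?_⟩
  rw [ladderSum_single, ← mul_assoc, h.D_mul, mul_assoc, hc, map_mul, mul_assoc]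

theorem U_mul_mem_range_ladderSum (h : IsGeneralizedWeyl σ x ι D U) {s : A}
    (hs : s ∈ (ladderSum ι D U).range) : U * s ∈ (ladderSum ι D U).range := by
  rw [range_ladderSum_swap] at hs ⊢
  exact h.symm.D_mul_mem_range_ladderSum hs

theorem ladderSum_surjective (h : IsGeneralizedWeyl σ x ι D U)
    (hA : Algebra.adjoin K {D, U} = ⊤) : Function.Surjective (ladderSum ι D U) := by
  have hmul (a : A) : ∀ s ∈ (ladderSum ι D U).range, a * s ∈ (ladderSum ι D U).range := by
    induction hA ▸ Algebra.mem_top (x := a) using Algebra.adjoin_induction with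
    | mem a ha =>
      rcases ha with rfl | rfl
      · exact fun _ => h.D_mul_mem_range_ladderSum
      · exact fun _ => h.U_mul_mem_range_ladderSum
    | algebraMap r => exact fun _ => algebraMap_mul_mem_range_ladderSum ι D U r
    | add a b _ _ ha hb => exact fun s hs => add_mul a b s ▸ add_mem (ha s hs) (hb s hs)
    | mul a b _ _ ha hb => exact fun s hs => (mul_assoc a b s).symm ▸ ha _ (hb s hs)
  intro a
  simpa using hmul a 1 ⟨.single 0 1, by simp [ladder]⟩

end IsGeneralizedWeyl

end GeneralizedWeyl

section SkewLaurent

open SkewMonoidAlgebra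

variable {K A B G : Type*} [CommRing K] [Ring A] [Algebra K A] [CommRing B] [Algebra K B]
  [Group G] [MulSemiringAction G B]

theorem exists_ladder_eq_single [IsDomain B] (g : G) {x : B} (hx : x ≠ 0) (n : ℤ) :
    ∃ c : B, c ≠ 0 ∧ ladder (single g 1) (single g⁻¹ x) n = single (g ^ n) c := by
  obtain ⟨k, rfl | rfl⟩ := n.eq_nat_or_neg
  · simpa using exists_single_pow_eq g (one_ne_zero (α := B)) k
  · simpa using exists_single_pow_eq g⁻¹ hx k

variable [SMulCommClass G K B]

/-- `SkewMonoidAlgebra.singleOneRingHom` as an algebra homomorphism. -/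
def singleOneAlgHom (K B G : Type*) [CommRing K] [CommRing B] [Algebra K B] [Group G]
    [MulSemiringAction G B] [SMulCommClass G K B] : B →ₐ[K] SkewMonoidAlgebra B G where
  __ := singleOneRingHom
  commutes' r := (congrFun coe_algebraMap r).symm

@[simp]
theorem singleOneAlgHom_apply (b : B) : singleOneAlgHom K B G b = single 1 b :=
  rfl

theorem isGeneralizedWeyl_single (K : Type*) [CommRing K] [Algebra K B] [SMulCommClass G K B]
    (g : G) (x : B) :
    IsGeneralizedWeyl (MulSemiringAction.toAlgEquiv K B g) x (singleOneAlgHom K B G)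
      (single g 1) (single g⁻¹ x) where
  D_mul b := by simp [single_mul_single]
  mul_U b := by simp [single_mul_single, mul_comm]
  U_mul_D := by simp [single_mul_single]
  D_mul_U := by simp [single_mul_single]

theorem coeff_map_ladderSum {g : G} (hg : Function.Injective (g ^ · : ℤ → G)) {ι : B →ₐ[K] A}
    {D U : A} {φ : A →ₐ[K] SkewMonoidAlgebra B G} (hι : φ.comp ι = singleOneAlgHom K B G)
    {c : ℤ → B} (hc : ∀ n, φ (ladder D U n) = single (g ^ n) (c n)) (v : ℤ →₀ B) (n : ℤ) :
    (φ (ladderSum ι D U v)).coeff (g ^ n) = v n * c n := by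
  induction v using Finsupp.induction_linear with
  | zero => simp
  | add v w hv hw => simp [hv, hw, add_mul]
  | single m b =>
    have hb : φ (ι b) = single 1 b := DFunLike.congr_fun hι b
    rw [ladderSum_single, map_mul, hb, hc, single_mul_single, one_mul, one_smul, coeff_single]
    obtain rfl | hmn := eq_or_ne m n
    · simp
    · rw [Finsupp.single_eq_of_ne' hmn, Finsupp.single_eq_of_ne' (hg.ne hmn), zero_mul]

theorem IsGeneralizedWeyl.injective_of_map_eq_single [IsDomain B] {σ : B ≃ₐ[K] B} {x : B}
    {ι : B →ₐ[K] A} {D U : A} (h : IsGeneralizedWeyl σ x ι D U)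
    (hA : Algebra.adjoin K {D, U} = ⊤) (hx : x ≠ 0) {g : G}
    (hg : Function.Injective (g ^ · : ℤ → G)) {φ : A →ₐ[K] SkewMonoidAlgebra B G}
    (hι : φ.comp ι = singleOneAlgHom K B G) (hD : φ D = single g 1)
    (hU : φ U = single g⁻¹ x) : Function.Injective φ := by
  choose c hc₀ hc using exists_ladder_eq_single g hx
  rw [injective_iff_map_eq_zero]
  intro a ha
  obtain ⟨v, rfl⟩ := h.ladderSum_surjective hA a
  suffices v = 0 by rw [this, map_zero]
  ext n
  have hφ (n : ℤ) : φ (ladder D U n) = single (g ^ n) (c n) := by rw [map_ladder, hD, hU, hc]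
  have hn := coeff_map_ladderSum hg hι hφ v n
  rw [ha, coeff_zero, Finsupp.zero_apply, zero_eq_mul] at hn
  exact hn.resolve_right (hc₀ n)

end SkewLaurent

section Bivariate

open Polynomial Bivariate

variable {K A : Type*} [CommSemiring K] [Semiring A] [Algebra K A]

theorem bivariate_algHom_ext {f g : K[X][Y] →ₐ[K] A} (hX : f (C X) = g (C X)) (hY : f Y = g Y) :
    f = g :=
  algHom_ext' (algHom_ext hX) hY

theorem semiconjBy_map_polynomial {R S : Type*} [Semiring R] [Semiring S] {f g : R[X] →+* S}
    {d : S} (hC : ∀ r, SemiconjBy d (f (C r)) (g (C r))) (hX : SemiconjBy d (f X) (g X))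
    (p : R[X]) : SemiconjBy d (f p) (g p) := by
  induction p using Polynomial.induction_on' with
  | add p q hp hq => simpa only [map_add] using hp.add_right hq
  | monomial n r =>
    simpa only [← C_mul_X_pow_eq_monomial, map_mul, map_pow] using (hC r).mul_right (hX.pow_right n)

theorem semiconjBy_map_bivariate {f g : K[X][Y] →ₐ[K] A} {d : A}
    (hX : SemiconjBy d (f (C X)) (g (C X))) (hY : SemiconjBy d (f Y) (g Y)) (p : K[X][Y]) :
    SemiconjBy d (f p) (g p) := by
  have hC (r : K) : SemiconjBy d (f (C (C r))) (g (C (C r))) := by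
    have hr : (C (C r) : K[X][Y]) = algebraMap K K[X][Y] r := rfl
    rw [hr, f.commutes, g.commutes]
    exact (Algebra.commutes r d).symm
  have hCX := semiconjBy_map_polynomial (f := (f : K[X][Y] →+* A).comp C)
    (g := (g : K[X][Y] →+* A).comp C) hC hX
  exact semiconjBy_map_polynomial (f := (f : K[X][Y] →+* A)) (g := (g : K[X][Y] →+* A)) hCX hY p

theorem commute_aeval {a b : A} (h : Commute a b) (p : K[X]) : Commute (aeval a p) b :=
  .symm <| semiconjBy_map_polynomial (f := (aeval a : K[X] →ₐ[K] A).toRingHom)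
    (g := (aeval a : K[X] →ₐ[K] A).toRingHom)
    (fun r => by simpa using (Algebra.commute_algebraMap_right r b).semiconjBy)
    (by simpa using h.symm.semiconjBy) p

/-- The algebra homomorphism out of `K[X][Y]` given by commuting images `a` of `X` and `b` of `Y`.
Unlike for `Polynomial.aevalAeval`, the target may be noncommutative. -/
def bivariateLift (K : Type*) {A : Type*} [CommSemiring K] [Semiring A] [Algebra K A] {a b : A}
    (h : Commute a b) : K[X][Y] →ₐ[K] A where
  __ := eval₂RingHom' (aeval a : K[X] →ₐ[K] A).toRingHom b (commute_aeval h)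
  commutes' r := by simp [Polynomial.algebraMap_apply]

@[simp]
theorem bivariateLift_C_X {a b : A} (h : Commute a b) : bivariateLift K h (C X) = a := by
  simp [bivariateLift]

@[simp]
theorem bivariateLift_Y {a b : A} (h : Commute a b) : bivariateLift K h Y = b := by
  simp [bivariateLift]

end Bivariate

namespace IsGeneralizedWeyl

variable {K A B : Type*} [CommRing K] [Ring A] [Algebra K A] [CommRing B] [Algebra K B]
  {σ : B ≃ₐ[K] B} {x : B} {ι : B →ₐ[K] A} {D U : A} {α β γ : K}

theorem downUp_rel1 (h : IsGeneralizedWeyl σ x ι D U)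
    (hσ : σ (σ x) = α • σ x + β • x + γ • 1) :
    D * U * U = α • (U * D * U) + β • (U * U * D) + γ • U := by
  rw [h.D_mul_U, h.mul_U, hσ, h.U_mul_D, h.mul_U, mul_assoc, h.U_mul_D]
  simp [mul_add]

theorem downUp_rel2 (h : IsGeneralizedWeyl σ x ι D U)
    (hσ : σ (σ x) = α • σ x + β • x + γ • 1) :
    D * D * U = α • (D * U * D) + β • (U * D * D) + γ • D := by
  rw [mul_assoc, h.D_mul_U, h.D_mul, hσ, h.U_mul_D]
  simp [add_mul]

end IsGeneralizedWeyl

namespace DownUp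

variable {K : Type} [Field K] {α β γ : K}

local notation "𝐃" => D K α β γ
local notation "𝐔" => U K α β γ

theorem D_mul_U_mul_U : 𝐃 * 𝐔 * 𝐔 = α • (𝐔 * 𝐃 * 𝐔) + β • (𝐔 * 𝐔 * 𝐃) + γ • 𝐔 := by
  have h := RingQuot.mkAlgHom_rel K (DownUpRel.rel1 (K := K) (a := α) (b := β) (g := γ))
  simp only [map_mul, map_add, map_smul] at h
  exact h

theorem D_mul_D_mul_U : 𝐃 * 𝐃 * 𝐔 = α • (𝐃 * 𝐔 * 𝐃) + β • (𝐔 * 𝐃 * 𝐃) + γ • 𝐃 := by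
  have h := RingQuot.mkAlgHom_rel K (DownUpRel.rel2 (K := K) (a := α) (b := β) (g := γ))
  simp only [map_mul, map_add, map_smul] at h
  exact h

section Lift

variable {R : Type*} [Semiring R] [Algebra K R]

/-- The algebra homomorphism out of `A(α,β,γ)` given by images `d`, `u` of the generators `D`, `U`
that satisfy the defining relations. -/
def lift (d u : R) (h₁ : d * u * u = α • (u * d * u) + β • (u * u * d) + γ • u)
    (h₂ : d * d * u = α • (d * u * d) + β • (u * d * d) + γ • d) : DownUp K α β γ →ₐ[K] R :=
  RingQuot.liftAlgHom K ⟨FreeAlgebra.lift K ![d, u], fun _ _ h => by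
    cases h with
    | rel1 => simpa using h₁
    | rel2 => simpa using h₂⟩

variable (d u : R) (h₁ : d * u * u = α • (u * d * u) + β • (u * u * d) + γ • u)
    (h₂ : d * d * u = α • (d * u * d) + β • (u * d * d) + γ • d)

@[simp]
theorem lift_D : lift d u h₁ h₂ 𝐃 = d := by
  simp [lift, D]

@[simp]
theorem lift_U : lift d u h₁ h₂ 𝐔 = u := by
  simp [lift, U]

end Lift

theorem adjoin_D_U : Algebra.adjoin K {𝐃, 𝐔} = ⊤ := by
  have hrange : (RingQuot.mkAlgHom K (DownUpRel K α β γ)).range = ⊤ :=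
    (AlgHom.range_eq_top _).2 (RingQuot.mkAlgHom_surjective K _)
  rw [← hrange, ← Algebra.map_top, ← FreeAlgebra.adjoin_range_ι, AlgHom.map_adjoin]
  congr 1
  ext a
  simp [D, U, Fin.exists_fin_two, eq_comm]

instance : InvariantBasisNumber (DownUp K α β γ) :=
  invariantBasisNumber_of_ringHom
    (lift (0 : K) 0 (by simp) (by simp) : DownUp K α β γ →ₐ[K] K).toRingHom

theorem commute_D_mul_U_U_mul_D : Commute (𝐃 * 𝐔) (𝐔 * 𝐃) := by
  have h₁ := congrArg (· * 𝐃) (D_mul_U_mul_U (K := K) (α := α) (β := β) (γ := γ))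
  have h₂ := congrArg (𝐔 * ·) (D_mul_D_mul_U (K := K) (α := α) (β := β) (γ := γ))
  simp only [mul_add, add_mul, mul_smul_comm, smul_mul_assoc, ← mul_assoc] at h₁ h₂
  rw [Commute, SemiconjBy, ← mul_assoc, ← mul_assoc, h₁, h₂]

open Polynomial Bivariate SkewMonoidAlgebra

/-- The automorphism `Y ↦ X`, `X ↦ αX + βY + γ` of `K[X][Y]`. With `X = DU` and `Y = UD` it
describes how the generators of `A(α,β,γ)` move past polynomials in `UD` and `DU`. -/
def shift (α γ : K) {β : K} (hβ : β ≠ 0) : K[X][Y] ≃ₐ[K] K[X][Y] :=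
  .ofAlgHom (aevalAeval (α • C X + β • Y + γ • 1) (C X))
    (aevalAeval Y (β⁻¹ • (C X - (α • Y + γ • 1))))
    (bivariate_algHom_ext (by simp) (by
      simp only [AlgHom.comp_apply, AlgHom.id_apply, map_sub, map_add, map_smul, map_one,
        aevalAeval_X, aevalAeval_Y]
      rw [add_right_comm, add_sub_cancel_left, inv_smul_smul₀ hβ]))
    (bivariate_algHom_ext (by
      simp only [AlgHom.comp_apply, AlgHom.id_apply, map_add, map_smul, map_one,
        aevalAeval_X, aevalAeval_Y]
      rw [add_right_comm, smul_inv_smul₀ hβ, add_sub_cancel]) (by simp))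

theorem shift_Y (hβ : β ≠ 0) : shift α γ hβ Y = C X := by simp [shift]

theorem shift_C_X (hβ : β ≠ 0) : shift α γ hβ (C X) = α • C X + β • Y + γ • 1 := by simp [shift]

theorem isGeneralizedWeyl_shift (hβ : β ≠ 0) :
    IsGeneralizedWeyl (shift α γ hβ) Y (bivariateLift K commute_D_mul_U_U_mul_D) 𝐃 𝐔 where
  D_mul := by
    refine semiconjBy_map_bivariate (g := (bivariateLift K commute_D_mul_U_U_mul_D).comp
      (shift α γ hβ)) ?_ ?_
    · simp [-smul_C, SemiconjBy, shift_C_X, add_mul, D_mul_D_mul_U, ← mul_assoc]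
    · simp [SemiconjBy, shift_Y, ← mul_assoc]
  mul_U p := by
    refine .symm (semiconjBy_map_bivariate (f := (bivariateLift K commute_D_mul_U_U_mul_D).comp
      (shift α γ hβ)) ?_ ?_ p)
    · simp [-smul_C, SemiconjBy, shift_C_X, mul_add, D_mul_U_mul_U, ← mul_assoc]
    · simp [SemiconjBy, shift_Y, ← mul_assoc]
  U_mul_D := by simp
  D_mul_U := by simp [shift_Y]

theorem exists_injective_algHom_skewMonoidAlgebra (hβ : β ≠ 0) :
    ∃ (_ : MulSemiringAction (Multiplicative ℤ) K[X][Y])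
      (_ : SMulCommClass (Multiplicative ℤ) K K[X][Y])
      (φ : DownUp K α β γ →ₐ[K] SkewMonoidAlgebra K[X][Y] (Multiplicative ℤ)),
      Function.Injective φ ∧ φ 𝐃 = single (.ofAdd 1) 1 ∧
        φ 𝐔 = single (.ofAdd 1)⁻¹ Y ∧
        (Multiplicative.ofAdd (1 : ℤ)) • (Y : K[X][Y]) = C X := by
  let τ : Multiplicative ℤ := .ofAdd 1
  let _ : MulSemiringAction (Multiplicative ℤ) K[X][Y] :=
    .compHom _ (zpowersHom (K[X][Y] ≃ₐ[K] K[X][Y]) (shift α γ hβ))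
  have hτ (p : K[X][Y]) : τ • p = shift α γ hβ p := by
    change zpowersHom (K[X][Y] ≃ₐ[K] K[X][Y]) (shift α γ hβ) τ p = _
    simp [τ]
  have : SMulCommClass (Multiplicative ℤ) K K[X][Y] :=
    ⟨fun n c p => map_smul (zpowersHom (K[X][Y] ≃ₐ[K] K[X][Y]) (shift α γ hβ) n) c p⟩
  have hW := isGeneralizedWeyl_single K τ (Y : K[X][Y])
  have hσ : τ • τ • (Y : K[X][Y]) = α • τ • Y + β • Y + γ • 1 := by
    rw [hτ, hτ, shift_Y, shift_C_X]
  let φ : DownUp K α β γ →ₐ[K] SkewMonoidAlgebra K[X][Y] (Multiplicative ℤ) :=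
    lift (single τ 1) (single τ⁻¹ Y) (hW.downUp_rel1 hσ) (hW.downUp_rel2 hσ)
  have hD : φ 𝐃 = single τ 1 := lift_D ..
  have hU : φ 𝐔 = single τ⁻¹ Y := lift_U ..
  refine ⟨_, ‹_›, φ, ?_, hD, hU, by rw [← shift_Y hβ, ← hτ]⟩
  refine (isGeneralizedWeyl_shift hβ).injective_of_map_eq_single adjoin_D_U X_ne_zero
    (g := τ) ?_ ?_ hD hU
  · intro m n h
    simpa [τ, ← ofAdd_zsmul] using h
  · refine bivariate_algHom_ext ?_ ?_
    · simp [hD, hU, single_mul_single, hτ, shift_Y]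
    · simp [hD, hU, single_mul_single]

theorem isLeftRegular_U (hβ : β ≠ 0) : IsLeftRegular 𝐔 := by
  obtain ⟨_, _, φ, hφ, -, hU, -⟩ :=
    exists_injective_algHom_skewMonoidAlgebra (α := α) (γ := γ) hβ
  intro a b h
  refine hφ (isLeftRegular_single (.ofAdd 1)⁻¹ (X_ne_zero (R := K[X])) ?_)
  simpa only [map_mul, hU] using congrArg φ h

variable (α β γ) in
/-- The element `DU - αUD - γ`, which corresponds to `X - αY - γ = β σ⁻¹(Y)` for `σ = shift α γ hβ`
under `X = DU`, `Y = UD`. -/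
def Z : DownUp K α β γ :=
  𝐃 * 𝐔 - α • (𝐔 * 𝐃) - γ • 1

theorem unimodular_U_D_add_one (hγ : γ ≠ 0) :
    𝐔 * (γ⁻¹ • (β • (𝐃 * 𝐃) - α • 𝐃 - 1)) +
      (𝐃 + 1) * (γ⁻¹ • (γ • 1 - (𝐃 - 1) * 𝐔 + α • (𝐔 * 𝐃))) = 1 := by
  rw [mul_smul_comm, mul_smul_comm, ← smul_add, inv_smul_eq_iff₀ hγ]
  have h := D_mul_D_mul_U (K := K) (α := α) (β := β) (γ := γ)
  simp only [mul_add, add_mul, mul_sub, sub_mul, mul_smul_comm, ← mul_assoc, mul_one, one_mul, h]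
  module

theorem U_mul_U_mem_colonIdeal : 𝐔 * 𝐔 ∈ colonIdeal 𝐔 (𝐃 + 1) := by
  refine mem_colonIdeal.2 ⟨α • (𝐃 * 𝐔) + β • (𝐔 * 𝐃) + γ • 1 + 𝐔, ?_⟩
  simp only [mul_add, add_mul, mul_smul_comm, ← mul_assoc, one_mul, mul_one, D_mul_U_mul_U]

theorem D_mul_Z : 𝐃 * Z α β γ = β • (𝐔 * 𝐃 * 𝐃) := by
  simp only [Z, mul_sub, mul_smul_comm, ← mul_assoc, D_mul_D_mul_U, mul_one]
  abel

theorem commute_D_mul_U_Z : Commute (𝐃 * 𝐔) (Z α β γ) :=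
  ((Commute.refl _).sub_right (commute_D_mul_U_U_mul_D.smul_right α)).sub_right
    ((Commute.one_right _).smul_right γ)

theorem one_sub_D_mul_U_mul_Z_mem_colonIdeal :
    (1 - 𝐃) * (𝐔 * Z α β γ) ∈ colonIdeal 𝐔 (𝐃 + 1) := by
  refine mem_colonIdeal.2 ⟨Z α β γ - β • (𝐃 * 𝐃 * (𝐃 * 𝐔)), ?_⟩
  calc
    _ = 𝐔 * Z α β γ - 𝐃 * Z α β γ * (𝐃 * 𝐔) := by
      rw [D_mul_Z, mul_sub, mul_smul_comm, smul_mul_assoc]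
      simp only [mul_assoc]
    _ = 𝐔 * Z α β γ - 𝐃 * (𝐃 * 𝐔 * Z α β γ) := by
      rw [commute_D_mul_U_Z.eq, mul_assoc]
    _ = _ := by
      simp only [mul_sub, sub_mul, add_mul, one_mul, mul_assoc]
      abel

theorem coeff_one_map_one_sub_D_mul_U_mul_Z [MulSemiringAction (Multiplicative ℤ) K[X][Y]]
    [SMulCommClass (Multiplicative ℤ) K K[X][Y]]
    {φ : DownUp K α β γ →ₐ[K] SkewMonoidAlgebra K[X][Y] (Multiplicative ℤ)}
    (hD : φ 𝐃 = single (.ofAdd 1) 1) (hU : φ 𝐔 = single (.ofAdd 1)⁻¹ Y)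
    (hY : Multiplicative.ofAdd (1 : ℤ) • (Y : K[X][Y]) = C X) :
    (φ ((1 - 𝐃) * (𝐔 * Z α β γ))).coeff 1 =
      -(C X * (C X - α • Y - γ • 1)) := by
  let ι := singleOneAlgHom K K[X][Y] (Multiplicative ℤ)
  have hDU : φ (𝐃 * 𝐔) = ι (C X) := by
    simp [ι, hD, hU, single_mul_single, hY]
  have hUD : φ (𝐔 * 𝐃) = ι Y := by
    simp [ι, hD, hU, single_mul_single]
  have hZ : φ (Z α β γ) = ι (C X - α • Y - γ • 1) := by
    simp only [Z, map_sub, map_smul, map_one, hDU, hUD]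
  have hne : (Multiplicative.ofAdd (1 : ℤ))⁻¹ ≠ 1 := by decide
  rw [sub_mul, one_mul, ← mul_assoc, map_sub, map_mul, map_mul φ (_ * _), hDU, hU, hZ, ← map_mul,
    singleOneAlgHom_apply, singleOneAlgHom_apply, single_mul_single, mul_one,
    SkewMonoidAlgebra.coeff_sub, Finsupp.sub_apply, coeff_single, coeff_single,
    Finsupp.single_eq_of_ne' hne, Finsupp.single_eq_same, zero_sub]

theorem not_Y_dvd_neg_C_X_mul (α γ : K) :
    ¬ (Y : K[X][Y]) ∣ -(C X * (C X - α • Y - γ • 1)) := by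
  rw [X_dvd_iff]
  simp [X_ne_zero, X_sub_C_ne_zero, smul_eq_C_mul]

theorem not_exists_generator_colonIdeal (hβ : β ≠ 0) :
    ¬ ∃ t ∈ colonIdeal 𝐔 (𝐃 + 1), ∀ f ∈ colonIdeal 𝐔 (𝐃 + 1), t ∣ f := by
  rintro ⟨t, ht, hdvd⟩
  obtain ⟨_, _, φ, -, hD, hU, hY⟩ :=
    exists_injective_algHom_skewMonoidAlgebra (α := α) (γ := γ) hβ
  obtain ⟨a, ha⟩ := mem_colonIdeal.1 ht
  obtain ⟨h, hh⟩ := hdvd _ U_mul_U_mem_colonIdeal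
  obtain ⟨h', hh'⟩ := hdvd _ one_sub_D_mul_U_mul_Z_mem_colonIdeal
  obtain ⟨b, hb, hUU⟩ := exists_single_pow_eq (Multiplicative.ofAdd (1 : ℤ))⁻¹
    (X_ne_zero (R := K[X])) 2
  refine not_Y_dvd_neg_C_X_mul α γ ?_
  rw [← coeff_one_map_one_sub_D_mul_U_mul_Z hD hU hY, hh', map_mul]
  have hφt : (single (.ofAdd 1) 1 + 1) * φ t = single (.ofAdd 1)⁻¹ Y * φ a := by
    rw [← hD, ← hU, ← map_one φ, ← map_add, ← map_mul, ← map_mul, ha]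
  have hφh : φ t * φ h = single ((.ofAdd 1)⁻¹ ^ 2) b := by
    rw [← map_mul, ← hh, map_mul, hU, ← sq, hUU]
  exact dvd_coeff_mul_of_single_add_one_mul_eq (by decide) hb hφt hφh (φ h') 1

end DownUp

theorem downUp_gamma_ne_zero_has_nontrivial_stablyFree_right_ideal_general
    (K : Type) [Field K] (α β γ : K) (hβ : β ≠ 0) (hγ : γ ≠ 0) :
    ∃ I : Submodule (DownUp K α β γ)ᵐᵒᵖ (DownUp K α β γ),
      IsStablyFreeRight (DownUp K α β γ) I ∧ ¬ Module.Free (DownUp K α β γ)ᵐᵒᵖ I := by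
  have hU : IsLeftRegular (DownUp.U K α β γ) := DownUp.isLeftRegular_U hβ
  have hrow := DownUp.unimodular_U_D_add_one (K := K) (α := α) (β := β) hγ
  refine ⟨colonIdeal (DownUp.U K α β γ) (DownUp.D K α β γ + 1),
    isStablyFreeRight_colonIdeal hU hrow, fun _ => ?_⟩
  exact DownUp.not_exists_generator_colonIdeal hβ (exists_generator_colonIdeal_of_free hU hrow)

/-- For `char K = 0`, `β ≠ 0`, `γ ≠ 0`, and both roots `λ, μ` of
`t² − αt − β` in `K`, the down-up algebra `A = A(α,β,γ)` has a right ideal that is stably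
free but not free as a right `A`-module. -/
theorem downUp_gamma_ne_zero_has_nontrivial_stablyFree_right_ideal
    (K : Type) [Field K] [CharZero K] (α β γ lam μ : K) (hβ : β ≠ 0) (hγ : γ ≠ 0)
    (hsum : lam + μ = α) (hprod : lam * μ = -β) :
    ∃ I : Submodule (DownUp K α β γ)ᵐᵒᵖ (DownUp K α β γ),
      IsStablyFreeRight (DownUp K α β γ) I ∧ ¬ Module.Free (DownUp K α β γ)ᵐᵒᵖ I :=
  downUp_gamma_ne_zero_has_nontrivial_stablyFree_right_ideal_general K α β γ hβ hγ
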